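/- arXiv:1709.06925 — 2 statements merged into one kernel-verified Lean document; each statement's English description precedes it below -/
import Mathlib

section
/- For a scalar function q and the induced Lagrangian metric g, the commutator of the material derivative with the Laplace–Beltrami operator Δ = g^{cd}∇_c∇_d satisfies [D_t, Δ] q = -2 h^{ab} ∇_a∇_b q - (Δ u^e) ∇_e q, where h_{ab} = (∇_a u_b + ∇_b u_a)/2. -/
/-!
The induced metric is the pullback of the Euclidean one by the flow map, so its Christoffel
symbols satisfy `Γ^e_{ab} ∂_e x^j = ∂_a∂_b x^j` (`Gamma_jac`). Consequently the covariant
derivatives of `u_b = ∂_b x^j V_j`, where `V(t, y) = v(t, x(t, y))`, reduce to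
`∇_a u_b = ∂_b x^j ∂_a V_j` and `∇_c∇_a u_b = ∂_b x^j (∂_c∂_a V_j - Γ^e_{ca} ∂_e V_j)`
(`covD_u`, `covD_covD_u`).

Since `D_t` commutes with the coordinate derivatives, `D_t ∂_a x^j = ∂_a V_j`. This gives
`D_t g_{ab} = 2 h_{ab}`, hence `D_t g^{ab} = -2 h^{ab}` (`deriv_gmat_inv`), and, by
differentiating `Γ^e_{ab} ∂_e x^j = ∂_a∂_b x^j`, also `D_t Γ^e_{ab} = g^{ef} ∇_a∇_b u_f`
(`deriv_Gamma`). Applying the product rule to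
`Δq = g^{cd} (∂_c∂_d q - Γ^e_{cd} ∂_e q)` and subtracting `Δ (D_t q)` leaves exactly the terms
in which `D_t` falls on `g^{cd}` or on `Γ^e_{cd}`.
-/

noncomputable section

/-- `(0,r)`-tensor fields on `ℝⁿ` (in Lagrangian coordinates). -/
abbrev Tens (n r : ℕ) := (Fin n → ℝ) → (Fin r → Fin n) → ℝ

/-- Partial derivative in the `a`-th coordinate direction. -/
def pd {n : ℕ} (a : Fin n) (f : (Fin n → ℝ) → ℝ) (y : Fin n → ℝ) : ℝ :=
  fderiv ℝ f y (Pi.single a 1)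

/-- Christoffel symbols `Γ^c_{ab}` of a (time-dependent) metric `g`. -/
def Gamma {n : ℕ} (g : ℝ → (Fin n → ℝ) → Matrix (Fin n) (Fin n) ℝ) (t : ℝ)
    (y : Fin n → ℝ) (c a b : Fin n) : ℝ :=
  (1 / 2) * ∑ d, (g t y)⁻¹ c d *
    (pd a (fun z => g t z b d) y + pd b (fun z => g t z a d) y -
      pd d (fun z => g t z a b) y)

/-- Covariant derivative of a `(0,r)` tensor: the new (covariant) index comes first. -/
def covD {n : ℕ} (g : ℝ → (Fin n → ℝ) → Matrix (Fin n) (Fin n) ℝ) (t : ℝ) {r : ℕ}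
    (w : Tens n r) : Tens n (r + 1) :=
  fun y J =>
    pd (J 0) (fun z => w z (Fin.tail J)) y -
      ∑ m : Fin r, ∑ e : Fin n,
        Gamma g t y e (J 0) (Fin.tail J m) * w y (Function.update (Fin.tail J) m e)

/-- The metric `g_{ab} = δ_{ij} (∂x^i/∂y^a)(∂x^j/∂y^b)` induced by the flow map `x`. -/
def gmat {n : ℕ} (x : ℝ → (Fin n → ℝ) → (Fin n → ℝ)) (t : ℝ) (y : Fin n → ℝ) :
    Matrix (Fin n) (Fin n) ℝ :=
  Matrix.of fun a b => ∑ i, pd a (fun z => x t z i) y * pd b (fun z => x t z i) y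

/-- The Lagrangian velocity one-form `u_a = (∂x^j/∂y^a) v_j(t, x(t,y))`. -/
def uLag {n : ℕ} (x v : ℝ → (Fin n → ℝ) → (Fin n → ℝ)) (t : ℝ) (y : Fin n → ℝ)
    (a : Fin n) : ℝ :=
  ∑ j, pd a (fun z => x t z j) y * v t (x t y) j

/-- `u` as a `(0,1)` tensor. -/
def uT {n : ℕ} (x v : ℝ → (Fin n → ℝ) → (Fin n → ℝ)) (t : ℝ) : Tens n 1 :=
  fun y I => uLag x v t y (I 0)

/-- The deformation tensor `h_{ab} = (∇_a u_b + ∇_b u_a)/2`. -/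
def hT {n : ℕ} (x v : ℝ → (Fin n → ℝ) → (Fin n → ℝ)) (t : ℝ) (y : Fin n → ℝ)
    (a b : Fin n) : ℝ :=
  (covD (gmat x) t (uT x v t) y ![a, b] + covD (gmat x) t (uT x v t) y ![b, a]) / 2

/-- `div u = g^{ab} ∇_a u_b`. -/
def divu {n : ℕ} (x v : ℝ → (Fin n → ℝ) → (Fin n → ℝ)) (t : ℝ) (y : Fin n → ℝ) : ℝ :=
  ∑ a, ∑ b, (gmat x t y)⁻¹ a b * covD (gmat x) t (uT x v t) y ![a, b]


/-- A scalar as a `(0,0)` tensor. -/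
def scalT {n : ℕ} (f : (Fin n → ℝ) → ℝ) : Tens n 0 := fun y _ => f y

/-- Laplace–Beltrami operator `Δf = g^{cd} ∇_c∇_d f`. -/
def lapB {n : ℕ} (g : ℝ → (Fin n → ℝ) → Matrix (Fin n) (Fin n) ℝ) (t : ℝ)
    (f : (Fin n → ℝ) → ℝ) (y : Fin n → ℝ) : ℝ :=
  ∑ c, ∑ d, (g t y)⁻¹ c d * covD g t (covD g t (scalT f)) y ![c, d]

/-- Joint smoothness of a time-dependent scalar field in time and space. -/
def Sm {n : ℕ} (F : ℝ → (Fin n → ℝ) → ℝ) : Prop :=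
  ContDiff ℝ (⊤ : ℕ∞) (fun p : ℝ × (Fin n → ℝ) => F p.1 p.2)

/-- Symmetry of second derivatives, as commutation of two directional derivatives. On
`ℝ × ℝⁿ` it covers both `∂_a∂_b = ∂_b∂_a` and `D_t ∂_a = ∂_a D_t`. -/
lemma fderiv_swap {E : Type*} [NormedAddCommGroup E] [NormedSpace ℝ E] {G : E → ℝ}
    (hG : ContDiff ℝ (⊤ : ℕ∞) G) (p a b : E) :
    fderiv ℝ (fun z => fderiv ℝ G z a) p b = fderiv ℝ (fun z => fderiv ℝ G z b) p a := by
  have hd : Differentiable ℝ (fderiv ℝ G) :=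
    (hG.fderiv_right (m := 1) (by norm_cast)).differentiable (by simp)
  have hs : IsSymmSndFDerivAt ℝ G p := hG.contDiffAt.isSymmSndFDerivAt (by simp; norm_cast)
  have key : ∀ c : E, fderiv ℝ (fun z => fderiv ℝ G z c) p
      = (fderiv ℝ (fderiv ℝ G) p).flip c := by
    intro c
    have := ((hd p).hasFDerivAt.clm_apply (hasFDerivAt_const c p)).fderiv
    rw [this]; ext; simp
  rw [key, key]
  exact hs b a

/-! ### Smooth time-dependent fields -/

section Calculus

variable {n : ℕ} {F : ℝ → (Fin n → ℝ) → ℝ}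

lemma Sm.slice (hF : Sm F) (t : ℝ) : ContDiff ℝ (⊤ : ℕ∞) (F t) :=
  hF.comp (contDiff_const.prodMk contDiff_id)

lemma Sm.slice_time (hF : Sm F) (y : Fin n → ℝ) :
    ContDiff ℝ (⊤ : ℕ∞) (fun s => F s y) :=
  hF.comp (contDiff_id.prodMk contDiff_const)

lemma Sm.diff (hF : Sm F) (t : ℝ) (y) : DifferentiableAt ℝ (F t) y :=
  (hF.slice t).differentiable (by simp) y

lemma Sm.diff_time (hF : Sm F) (t : ℝ) (y) : DifferentiableAt ℝ (fun s => F s y) t :=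
  (hF.slice_time y).differentiable (by simp) t

lemma Sm.pd_eq (hF : Sm F) (a : Fin n) (t : ℝ) (y) :
    pd a (F t) y = fderiv ℝ (fun p : ℝ × (Fin n → ℝ) => F p.1 p.2) (t, y)
      (0, Pi.single a 1) := by
  have h := (hF.differentiable (by simp) (t, y)).hasFDerivAt
  have h2 : HasFDerivAt (fun z : Fin n → ℝ => (t, z))
      ((0 : (Fin n → ℝ) →L[ℝ] ℝ).prod (ContinuousLinearMap.id ℝ _)) y :=
    (hasFDerivAt_const t y).prodMk (hasFDerivAt_id y)
  have h3 := (h.comp y h2).fderiv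
  have : fderiv ℝ (F t) y = _ := h3
  simp [pd, this]

lemma Sm.deriv_eq (hF : Sm F) (t : ℝ) (y) :
    deriv (fun s => F s y) t = fderiv ℝ (fun p : ℝ × (Fin n → ℝ) => F p.1 p.2) (t, y)
      (1, 0) := by
  have h := (hF.differentiable (by simp) (t, y)).hasFDerivAt
  have h2 : HasDerivAt (fun s : ℝ => (s, y)) ((1 : ℝ), (0 : Fin n → ℝ)) t :=
    (hasDerivAt_id t).prodMk (hasDerivAt_const t y)
  exact (h.comp_hasDerivAt t h2).deriv

lemma Sm.fderiv_apply (hF : Sm F) (a : ℝ × (Fin n → ℝ)) :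
    Sm (fun t y => fderiv ℝ (fun p : ℝ × (Fin n → ℝ) => F p.1 p.2) (t, y) a) := by
  have : ContDiff ℝ (⊤ : ℕ∞) (fderiv ℝ (fun p : ℝ × (Fin n → ℝ) => F p.1 p.2)) :=
    ContDiff.fderiv_right hF (by norm_cast)
  exact this.clm_apply contDiff_const

lemma Sm.pd (hF : Sm F) (a : Fin n) : Sm (fun t y => pd a (F t) y) := by
  simp only [hF.pd_eq]
  exact hF.fderiv_apply _

lemma Sm.dt (hF : Sm F) : Sm (fun t y => deriv (fun s => F s y) t) := by
  simp only [hF.deriv_eq]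
  exact hF.fderiv_apply _

lemma Sm.pd_symm (hF : Sm F) (a b : Fin n) (t : ℝ) (y) :
    _root_.pd a (fun z => _root_.pd b (F t) z) y
      = _root_.pd b (fun z => _root_.pd a (F t) z) y := by
  rw [(hF.pd b).pd_eq, (hF.pd a).pd_eq]
  simp only [hF.pd_eq]
  exact fderiv_swap hF _ _ _

/-- Time and space derivatives of a smooth field commute. -/
lemma Sm.hasDerivAt_pd (hF : Sm F) (a : Fin n) (t : ℝ) (y) :
    HasDerivAt (fun s => _root_.pd a (F s) y)
      (_root_.pd a (fun z => deriv (fun s => F s z) t) y) t := by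
  have h := ((hF.pd a).diff_time t y).hasDerivAt
  refine h.congr_deriv ?_
  rw [(hF.pd a).deriv_eq, hF.dt.pd_eq]
  simp only [hF.pd_eq, hF.deriv_eq]
  exact fderiv_swap hF _ _ _

lemma pd_mul {f k : (Fin n → ℝ) → ℝ} {y} (hf : DifferentiableAt ℝ f y)
    (hk : DifferentiableAt ℝ k y) (a : Fin n) :
    pd a (fun z => f z * k z) y = pd a f y * k y + f y * pd a k y := by
  simp only [pd, fderiv_fun_mul hf hk]
  simp; ring

lemma pd_sum {f : Fin n → (Fin n → ℝ) → ℝ} {y} (hf : ∀ i, DifferentiableAt ℝ (f i) y)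
    (a : Fin n) : pd a (fun z => ∑ i, f i z) y = ∑ i, pd a (f i) y := by
  simp only [pd, fderiv_fun_sum (fun i _ => hf i)]
  simp

lemma pd_sum_mul {f k : Fin n → (Fin n → ℝ) → ℝ} {y}
    (hf : ∀ i, DifferentiableAt ℝ (f i) y) (hk : ∀ i, DifferentiableAt ℝ (k i) y)
    (a : Fin n) : pd a (fun z => ∑ i, f i z * k i z) y =
      ∑ i, (pd a (f i) y * k i y + f i y * pd a (k i) y) := by
  rw [pd_sum fun i => (hf i).fun_mul (hk i)]
  exact Finset.sum_congr rfl fun i _ => pd_mul (hf i) (hk i) a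

lemma differentiableAt_det {A : ℝ → Matrix (Fin n) (Fin n) ℝ} {t : ℝ}
    (hA : ∀ a b, DifferentiableAt ℝ (fun s => A s a b) t) :
    DifferentiableAt ℝ (fun s => (A s).det) t := by
  simp only [Matrix.det_apply]
  refine DifferentiableAt.fun_sum fun σ _ => DifferentiableAt.const_smul ?_ _
  exact DifferentiableAt.fun_finsetProd fun i _ => hA _ _

lemma differentiableAt_inv_entry {A : ℝ → Matrix (Fin n) (Fin n) ℝ} {t : ℝ}
    (hA : ∀ a b, DifferentiableAt ℝ (fun s => A s a b) t) (hu : IsUnit (A t).det)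
    (a b : Fin n) : DifferentiableAt ℝ (fun s => (A s)⁻¹ a b) t := by
  simp only [Matrix.inv_def, Matrix.smul_apply, Ring.inverse_eq_inv', smul_eq_mul,
    Matrix.adjugate_apply]
  refine DifferentiableAt.mul ((differentiableAt_det hA).inv hu.ne_zero)
    (differentiableAt_det fun c d => ?_)
  by_cases h : c = b
  · subst h; simp
  · simpa [Matrix.updateRow_ne h] using hA c d

/-- Entrywise form of `(A⁻¹)' = -A⁻¹ A' A⁻¹`. -/
lemma hasDerivAt_inv_entry {A : ℝ → Matrix (Fin n) (Fin n) ℝ} {A' : Matrix (Fin n) (Fin n) ℝ}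
    {t : ℝ} (hA : ∀ a b, HasDerivAt (fun s => A s a b) (A' a b) t)
    (hu : ∀ s, IsUnit (A s).det) (a b : Fin n) :
    HasDerivAt (fun s => (A s)⁻¹ a b) (-((A t)⁻¹ * A' * (A t)⁻¹) a b) t := by
  have hd := differentiableAt_inv_entry (fun a b => (hA a b).differentiableAt) (hu t)
  let D : Matrix (Fin n) (Fin n) ℝ := Matrix.of fun a b => deriv (fun s => (A s)⁻¹ a b) t
  have hD : ∀ a b, HasDerivAt (fun s => (A s)⁻¹ a b) (D a b) t := fun a b =>
    (hd a b).hasDerivAt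
  have h0 : D * A t + (A t)⁻¹ * A' = 0 := by
    ext a b
    have h1 : HasDerivAt (fun s => ((A s)⁻¹ * A s) a b)
        ((D * A t + (A t)⁻¹ * A') a b) t := by
      simp only [Matrix.mul_apply, Matrix.add_apply, ← Finset.sum_add_distrib]
      exact HasDerivAt.fun_sum fun c _ => (hD a c).mul (hA c b)
    have h2 : (fun s => ((A s)⁻¹ * A s) a b) = fun _ => (1 : Matrix _ _ ℝ) a b := by
      funext s; rw [Matrix.nonsing_inv_mul _ (hu s)]
    rw [h2] at h1
    exact h1.unique (hasDerivAt_const _ _)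
  have h3 : D = -((A t)⁻¹ * A' * (A t)⁻¹) := by
    have := congrArg (· * (A t)⁻¹) h0
    simp only [add_mul, zero_mul, Matrix.mul_nonsing_inv_cancel_right _ _ (hu t)] at this
    exact eq_neg_of_add_eq_zero_left this
  have := hD a b
  rwa [h3] at this

end Calculus

/-! ### Covariant derivatives in coordinates -/

section Covariant

variable {n : ℕ} (g : ℝ → (Fin n → ℝ) → Matrix (Fin n) (Fin n) ℝ) (t : ℝ) (y : Fin n → ℝ)

lemma covD_scal (f : (Fin n → ℝ) → ℝ) (I : Fin 1 → Fin n) :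
    covD g t (scalT f) y I = pd (I 0) f y := by
  simp [covD, scalT]

lemma covD_one (w : Tens n 1) (a b : Fin n) :
    covD g t w y ![a, b] =
      pd a (fun z => w z ![b]) y - ∑ e, Gamma g t y e a b * w y ![e] := by
  have h1 : Fin.tail ![a, b] = ![b] := by ext i; fin_cases i; rfl
  have h2 : ∀ e, Function.update ![b] 0 e = ![e] := by
    intro e; ext i; fin_cases i; rfl
  simp [covD, h1, h2]

lemma covD_two (w : Tens n 2) (c a b : Fin n) :
    covD g t w y ![c, a, b] =
      pd c (fun z => w z ![a, b]) y - ((∑ e, Gamma g t y e c a * w y ![e, b])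
        + ∑ e, Gamma g t y e c b * w y ![a, e]) := by
  have h1 : Fin.tail ![c, a, b] = ![a, b] := by ext i; fin_cases i <;> rfl
  have h2 : ∀ e, Function.update ![a, b] 0 e = ![e, b] := by
    intro e; ext i; fin_cases i <;> rfl
  have h3 : ∀ e, Function.update ![a, b] 1 e = ![a, e] := by
    intro e; ext i; fin_cases i <;> rfl
  simp [covD, h1, Fin.sum_univ_two, h2, h3]

lemma hess_scal (f : (Fin n → ℝ) → ℝ) (a b : Fin n) :
    covD g t (covD g t (scalT f)) y ![a, b] =
      pd a (fun z => pd b f z) y - ∑ e, Gamma g t y e a b * pd e f y := by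
  rw [covD_one]
  simp [covD_scal]

end Covariant

/-! ### The metric induced by the flow -/

section Flow

variable {n : ℕ} {x v : ℝ → (Fin n → ℝ) → (Fin n → ℝ)}

lemma gmat_symm (t : ℝ) (y) (a b : Fin n) : gmat x t y a b = gmat x t y b a := by
  simp [gmat, mul_comm]

lemma gmat_inv_symm (t : ℝ) (y) (a b : Fin n) :
    (gmat x t y)⁻¹ a b = (gmat x t y)⁻¹ b a := by
  have h : (gmat x t y).transpose = gmat x t y := by
    ext a b; exact gmat_symm t y b a
  have := Matrix.transpose_nonsing_inv (gmat x t y)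
  rw [h] at this
  exact congrFun (congrFun this b) a

/-- `g⁻¹ (∂x)ᵀ` is a left inverse of the square Jacobian `∂x`, hence also a right inverse:
`(∂x) g⁻¹ (∂x)ᵀ = 1`. -/
lemma jac_inv (t : ℝ) (y) (hdet : IsUnit (gmat x t y).det) (j i : Fin n) :
    ∑ e, ∑ d, pd e (fun z => x t z j) y * (gmat x t y)⁻¹ e d * pd d (fun z => x t z i) y
      = if j = i then 1 else 0 := by
  let J : Matrix (Fin n) (Fin n) ℝ := Matrix.of fun i a => pd a (fun z => x t z i) y
  have hg : gmat x t y = J.transpose * J := by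
    ext a b; simp [gmat, J, Matrix.mul_apply]
  have h1 : ((gmat x t y)⁻¹ * J.transpose) * J = 1 := by
    rw [Matrix.mul_assoc, ← hg, Matrix.nonsing_inv_mul _ hdet]
  have h1' : J * ((gmat x t y)⁻¹ * J.transpose) = 1 := mul_eq_one_comm.mp h1
  have h2 := congrFun (congrFun h1' j) i
  rw [Matrix.one_apply] at h2
  rw [← h2]
  simp [Matrix.mul_apply, J, Finset.mul_sum, mul_assoc]

variable (hx : ∀ i, Sm (fun t y => x t y i))
include hx

lemma pd_gmat (t : ℝ) (y) (a b d : Fin n) :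
    pd d (fun z => gmat x t z a b) y =
      ∑ i, (pd d (fun z => pd a (fun z => x t z i) z) y * pd b (fun z => x t z i) y +
        pd a (fun z => x t z i) y * pd d (fun z => pd b (fun z => x t z i) z) y) := by
  simp only [gmat, Matrix.of_apply]
  exact pd_sum_mul (fun i => ((hx i).pd a).diff t y) (fun i => ((hx i).pd b).diff t y) d

/-- The Christoffel symbols of the induced metric, `Γ^e_{ab} = g^{ed} ∂_d x^i ∂_a∂_b x^i`. -/
lemma Gamma_eq (t : ℝ) (y) (e a b : Fin n) :
    Gamma (gmat x) t y e a b = ∑ d, ∑ i, (gmat x t y)⁻¹ e d *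
      (pd d (fun z => x t z i) y * pd a (fun z => pd b (fun z => x t z i) z) y) := by
  unfold Gamma
  rw [Finset.mul_sum]
  refine Finset.sum_congr rfl fun d _ => ?_
  rw [pd_gmat hx, pd_gmat hx, pd_gmat hx, ← Finset.sum_add_distrib,
    ← Finset.sum_sub_distrib, ← Finset.mul_sum, mul_left_comm, Finset.mul_sum]
  congr 1
  refine Finset.sum_congr rfl fun i _ => ?_
  rw [(hx i).pd_symm b a, (hx i).pd_symm d a, (hx i).pd_symm d b]
  ring

/-- `Γ^e_{ab} ∂_e x^j = ∂_a∂_b x^j`: the induced metric is the pullback of a flat one. -/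
lemma Gamma_jac (t : ℝ) (y) (hdet : IsUnit (gmat x t y).det) (j a b : Fin n) :
    ∑ e, Gamma (gmat x) t y e a b * pd e (fun z => x t z j) y =
      pd a (fun z => pd b (fun z => x t z j) z) y := by
  have h : ∀ e, Gamma (gmat x) t y e a b * pd e (fun z => x t z j) y =
      ∑ i, (∑ d, pd e (fun z => x t z j) y * (gmat x t y)⁻¹ e d *
        pd d (fun z => x t z i) y) * pd a (fun z => pd b (fun z => x t z i) z) y := by
    intro e
    rw [Gamma_eq hx, Finset.sum_comm, Finset.sum_mul]
    refine Finset.sum_congr rfl fun i _ => ?_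
    rw [Finset.sum_mul, Finset.sum_mul]
    refine Finset.sum_congr rfl fun d _ => ?_
    ring
  simp only [h]
  rw [Finset.sum_comm]
  simp only [← Finset.sum_mul, jac_inv t y hdet]
  simp

variable (hV : ∀ i, Sm (fun t y => v t (x t y) i))
  (hdet : ∀ t y, IsUnit (gmat x t y).det)
include hV hdet

lemma covD_u (t : ℝ) (y) (a b : Fin n) :
    covD (gmat x) t (uT x v t) y ![a, b] =
      ∑ j, pd b (fun z => x t z j) y * pd a (fun z => v t (x t z) j) y := by
  rw [covD_one]
  simp only [uT, uLag, Matrix.cons_val_zero]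
  rw [pd_sum_mul (fun j => ((hx j).pd b).diff t y) (fun j => (hV j).diff t y)]
  simp only [Finset.mul_sum]
  rw [Finset.sum_comm, ← Finset.sum_sub_distrib]
  refine Finset.sum_congr rfl fun j _ => ?_
  simp only [← mul_assoc, ← Finset.sum_mul, Gamma_jac hx t y (hdet t y)]
  ring

lemma covD_covD_u (t : ℝ) (y) (c a b : Fin n) :
    covD (gmat x) t (covD (gmat x) t (uT x v t)) y ![c, a, b] =
      ∑ j, pd b (fun z => x t z j) y * (pd c (fun z => pd a (fun z => v t (x t z) j) z) y
        - ∑ e, Gamma (gmat x) t y e c a * pd e (fun z => v t (x t z) j) y) := by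
  rw [covD_two]
  simp only [covD_u hx hV hdet]
  rw [pd_sum_mul (fun j => ((hx j).pd b).diff t y) (fun j => ((hV j).pd a).diff t y)]
  simp only [Finset.mul_sum]
  rw [Finset.sum_comm, Finset.sum_comm (f := fun e j => Gamma (gmat x) t y e c b * _),
    ← Finset.sum_add_distrib, ← Finset.sum_sub_distrib]
  refine Finset.sum_congr rfl fun j _ => ?_
  simp only [← mul_assoc, ← Finset.sum_mul, Gamma_jac hx t y (hdet t y)]
  rw [mul_sub, Finset.mul_sum]
  simp only [mul_left_comm, mul_assoc]
  ring_nf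

variable (hflow : ∀ t y, HasDerivAt (fun s => x s y) (v t (x t y)) t)
include hflow

omit hV hdet in
lemma deriv_jac (t : ℝ) (y) (j a : Fin n) :
    HasDerivAt (fun s => pd a (fun z => x s z j) y)
      (pd a (fun z => v t (x t z) j) y) t := by
  have h := (hx j).hasDerivAt_pd a t y
  simpa only [((hasDerivAt_pi.1 (hflow t _)) j).deriv] using h

omit hV hdet in
lemma deriv_hess_x (t : ℝ) (y) (j a b : Fin n) :
    HasDerivAt (fun s => pd a (fun z => pd b (fun z => x s z j) z) y)
      (pd a (fun z => pd b (fun z => v t (x t z) j) z) y) t := by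
  have h := ((hx j).pd b).hasDerivAt_pd a t y
  simpa only [(deriv_jac hx hflow t _ j b).deriv] using h

/-- `D_t g_{ab} = 2 h_{ab}`. -/
lemma deriv_gmat (t : ℝ) (y) (a b : Fin n) :
    HasDerivAt (fun s => gmat x s y a b) ((2 : ℝ) * hT x v t y a b) t := by
  have h := HasDerivAt.fun_sum (u := Finset.univ) fun i _ =>
    (deriv_jac hx hflow t y i a).mul (deriv_jac hx hflow t y i b)
  have e : (2 : ℝ) * hT x v t y a b = ∑ i, (pd a (fun z => v t (x t z) i) y *
      pd b (fun z => x t z i) y + pd a (fun z => x t z i) y *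
        pd b (fun z => v t (x t z) i) y) := by
    rw [hT, covD_u hx hV hdet, covD_u hx hV hdet, mul_div_cancel₀ _ two_ne_zero,
      ← Finset.sum_add_distrib]
    exact Finset.sum_congr rfl fun i _ => by ring
  rw [e]
  exact h

/-- `D_t g^{ab} = -2 h^{ab}`. -/
lemma deriv_gmat_inv (t : ℝ) (y) (a b : Fin n) :
    HasDerivAt (fun s => (gmat x s y)⁻¹ a b)
      (-2 * ∑ c, ∑ d, (gmat x t y)⁻¹ a c * (gmat x t y)⁻¹ b d * hT x v t y c d) t := by
  have h := hasDerivAt_inv_entry (A := fun s => gmat x s y)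
    (A' := Matrix.of fun a b => (2 : ℝ) * hT x v t y a b)
    (fun a b => deriv_gmat hx hV hdet hflow t y a b) (fun s => hdet s y) a b
  refine h.congr_deriv ?_
  simp only [Matrix.mul_apply, Matrix.of_apply, Finset.mul_sum, Finset.sum_mul,
    ← Finset.sum_neg_distrib]
  rw [Finset.sum_comm]
  refine Finset.sum_congr rfl fun c _ => Finset.sum_congr rfl fun d _ => ?_
  rw [gmat_inv_symm t y d b]
  ring

/-- `D_t Γ^e_{ab} = g^{ef} ∇_a∇_b u_f`, obtained by differentiating
`Γ^e_{ab} ∂_e x^j = ∂_a∂_b x^j` in time and contracting with `∂_f x^j`. -/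
lemma deriv_Gamma (t : ℝ) (y) (e a b : Fin n) :
    HasDerivAt (fun s => Gamma (gmat x) s y e a b)
      (∑ f, (gmat x t y)⁻¹ e f *
        covD (gmat x) t (covD (gmat x) t (uT x v t)) y ![a, b, f]) t := by
  have hdiff : ∀ e, DifferentiableAt ℝ (fun s => Gamma (gmat x) s y e a b) t := by
    intro e
    simp only [Gamma_eq hx]
    refine DifferentiableAt.fun_sum fun d _ => DifferentiableAt.fun_sum fun i _ => ?_
    exact (deriv_gmat_inv hx hV hdet hflow t y e d).differentiableAt.mul
      ((deriv_jac hx hflow t y i d).differentiableAt.mul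
        (deriv_hess_x hx hflow t y i a b).differentiableAt)
  -- `D` is determined by the equations `key`, since `∂x` is invertible.
  set D : Fin n → ℝ := fun e => deriv (fun s => Gamma (gmat x) s y e a b) t with hDdef
  have hD : ∀ e, HasDerivAt (fun s => Gamma (gmat x) s y e a b) (D e) t := fun e =>
    (hdiff e).hasDerivAt
  have key : ∀ j, pd a (fun z => pd b (fun z => v t (x t z) j) z) y
      - ∑ e, Gamma (gmat x) t y e a b * pd e (fun z => v t (x t z) j) y
      = ∑ e, D e * pd e (fun z => x t z j) y := by
    intro j
    have h1 := HasDerivAt.fun_sum (u := Finset.univ) fun e _ =>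
      (hD e).mul (deriv_jac hx hflow t y j e)
    have h2 := deriv_hess_x hx hflow t y j a b
    have h3 : (fun s => pd a (fun z => pd b (fun z => x s z j) z) y) =
        fun s => ∑ e, Gamma (gmat x) s y e a b * pd e (fun z => x s z j) y := by
      funext s; rw [Gamma_jac hx s y (hdet s y)]
    rw [h3] at h2
    rw [h2.unique h1, Finset.sum_add_distrib]
    ring
  have hu : ∀ f, covD (gmat x) t (covD (gmat x) t (uT x v t)) y ![a, b, f]
      = ∑ k, gmat x t y f k * D k := by
    intro f
    rw [covD_covD_u hx hV hdet]
    simp only [key, gmat, Matrix.of_apply, Finset.mul_sum, Finset.sum_mul]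
    rw [Finset.sum_comm]
    exact Finset.sum_congr rfl fun k _ => Finset.sum_congr rfl fun j _ => by ring
  -- By `hu`, the contraction of `∇_a∇_b u_f` with `g^{ef}` is `g⁻¹ (g D) = D`.
  have hfin : (gmat x t y)⁻¹.mulVec ((gmat x t y).mulVec D) = D := by
    rw [Matrix.mulVec_mulVec, Matrix.nonsing_inv_mul _ (hdet t y), Matrix.one_mulVec]
  have := hD e
  rw [← hfin] at this
  simp only [hu]
  exact this

end Flow

/-- `[D_t, Δ] q = -2 h^{ab} ∇_a∇_b q - (Δu^e) ∇_e q` for the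
Laplace–Beltrami operator of the metric induced by the Lagrangian flow, where
`h_{ab} = (∇_a u_b + ∇_b u_a)/2`. -/
theorem stmt3 {n : ℕ} (x v : ℝ → (Fin n → ℝ) → (Fin n → ℝ))
    (q : ℝ → (Fin n → ℝ) → ℝ)
    (hx : ContDiff ℝ (⊤ : ℕ∞) (fun p : ℝ × (Fin n → ℝ) => x p.1 p.2))
    (hv : ContDiff ℝ (⊤ : ℕ∞) (fun p : ℝ × (Fin n → ℝ) => v p.1 p.2))
    (hq : ContDiff ℝ (⊤ : ℕ∞) (fun p : ℝ × (Fin n → ℝ) => q p.1 p.2))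
    (hflow : ∀ t y, HasDerivAt (fun s => x s y) (v t (x t y)) t)
    (hdet : ∀ t y, IsUnit (gmat x t y).det) :
    ∀ t (y : Fin n → ℝ),
      deriv (fun s => lapB (gmat x) s (q s) y) t -
          lapB (gmat x) t (fun z => deriv (fun s => q s z) t) y =
        -2 * (∑ a, ∑ b,
            (∑ c, ∑ d, (gmat x t y)⁻¹ a c * (gmat x t y)⁻¹ b d * hT x v t y c d) *
              covD (gmat x) t (covD (gmat x) t (scalT (q t))) y ![a, b]) -
          ∑ e,
            (∑ c, ∑ d, ∑ f, (gmat x t y)⁻¹ c d * (gmat x t y)⁻¹ e f *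
                covD (gmat x) t (covD (gmat x) t (uT x v t)) y ![c, d, f]) *
              covD (gmat x) t (scalT (q t)) y ![e] := by
  intro t y
  have hx' : ∀ i, Sm (fun t y => x t y i) := fun i => contDiff_pi.1 hx i
  have hV : ∀ i, Sm (fun t y => v t (x t y) i) := fun i =>
    contDiff_pi.1 (hv.comp (contDiff_fst.prodMk hx)) i
  have hq' : Sm q := hq
  -- `D_t ∇_c∇_d q = ∇_c∇_d D_t q - (D_t Γ^e_{cd}) ∂_e q`
  have hH : ∀ c d, HasDerivAt (fun s => covD (gmat x) s (covD (gmat x) s (scalT (q s))) y ![c, d])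
      (covD (gmat x) t (covD (gmat x) t (scalT fun z => deriv (fun s => q s z) t)) y ![c, d]
        - ∑ e, (∑ f, (gmat x t y)⁻¹ e f *
            covD (gmat x) t (covD (gmat x) t (uT x v t)) y ![c, d, f]) * pd e (q t) y) t := by
    intro c d
    simp only [hess_scal]
    have h1 := (hq'.pd d).hasDerivAt_pd c t y
    simp only [(hq'.hasDerivAt_pd d t _).deriv] at h1
    have h2 := HasDerivAt.fun_sum (u := Finset.univ) fun e _ =>
      (deriv_Gamma hx' hV hdet hflow t y e c d).mul (hq'.hasDerivAt_pd e t y)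
    refine (h1.sub h2).congr_deriv ?_
    rw [Finset.sum_add_distrib]
    ring
  have hL : HasDerivAt (fun s => lapB (gmat x) s (q s) y) _ t :=
    HasDerivAt.fun_sum (u := Finset.univ) fun c _ =>
      HasDerivAt.fun_sum (u := Finset.univ) fun d _ =>
        (deriv_gmat_inv hx' hV hdet hflow t y c d).mul (hH c d)
  rw [hL.deriv]
  have hR : ∑ e, (∑ c, ∑ d, ∑ f, (gmat x t y)⁻¹ c d * (gmat x t y)⁻¹ e f *
        covD (gmat x) t (covD (gmat x) t (uT x v t)) y ![c, d, f]) *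
          covD (gmat x) t (scalT (q t)) y ![e] =
      ∑ c, ∑ d, (gmat x t y)⁻¹ c d * ∑ e, (∑ f, (gmat x t y)⁻¹ e f *
        covD (gmat x) t (covD (gmat x) t (uT x v t)) y ![c, d, f]) * pd e (q t) y := by
    simp only [covD_scal, Matrix.cons_val_zero, Finset.sum_mul, Finset.mul_sum, mul_assoc]
    rw [Finset.sum_comm]
    exact Finset.sum_congr rfl fun c _ => Finset.sum_comm
  rw [hR, lapB, Finset.mul_sum, ← Finset.sum_sub_distrib, ← Finset.sum_sub_distrib]
  refine Finset.sum_congr rfl fun c _ => ?_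
  rw [Finset.mul_sum, ← Finset.sum_sub_distrib, ← Finset.sum_sub_distrib]
  refine Finset.sum_congr rfl fun d _ => ?_
  ring
end
end

section
/- For a scalar function q and any integer r ≥ 1, the commutator of D_t with r-fold covariant differentiation satisfies [D_t, ∇^r] q = -∑_{s=1}^{r-1} C(r, s+1) (∇^{s+1} u) ·̃ (∇^{r-s} q), where C(r,s+1) is the binomial coefficient and ·̃ denotes a partially symmetrized contraction. -/
/-!
The metric is the pullback of the Euclidean one by the flow `x`, so it is flat: in the Eulerian
frame `D_i = ∂/∂x^i = ∑_a (J⁻¹)_i^a ∂/∂y^a`, with `J_a^i = ∂x^i/∂y^a`, covariant differentiation is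
plain differentiation, and the `D_i` commute. The Christoffel symbols satisfy
`∂_a J_b^i = ∑_e Γ^e_{ab} J_e^i`, whence
`(∇^r q)_{a₁…a_r} = ∑ J_{a₁}^{i₁} ⋯ J_{a_r}^{i_r} D_{i₁} ⋯ D_{i_r} q`
(`Frame.nab`, `Frame.X_nabS`, `covIterS_ev`, `covIterV_ev`). In particular this is symmetric in the
indices, so it can be indexed by a multiset.

The material derivative obeys `[D_t, D_i] = -∑_k (D_i v_k) D_k` and `D_t J_a^i = ∂_a v_i`.
Induction on the set `S` of indices, using the Leibniz rule over subsets, gives (`Frame.T_nabS`)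
`[D_t, ∇_S] q = -∑_{U ⊆ S, |U| ≥ 2} ∑_k (∇_U v_k) (∇_{S∖U} D_k q)`:
the terms with `|U| = 1` from the commutators cancel against the derivatives of the factors `J`.
Since `g⁻¹ = (J⁻¹)ᵀ J⁻¹`, the sum over `k` is the metric contraction (`contract_ev`), and averaging
over permutations turns the sum over subsets of size `s + 1` into `C(r, s+1)` times the
symmetrization (`sum_perm_map`).

The identities for `J`, `D`, `Γ` and `D_t` are purely algebraic, and are proved for derivations of a
commutative algebra (`Frame`); this is then applied to the algebra of smooth functions of `(t, y)`.
-/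

noncomputable section

/-- Iterated covariant derivative of a scalar: `covIterS g t f k = ∇^k f`,
with the outermost derivative index first. -/
def covIterS {n : ℕ} (g : ℝ → (Fin n → ℝ) → Matrix (Fin n) (Fin n) ℝ) (t : ℝ)
    (f : (Fin n → ℝ) → ℝ) : (k : ℕ) → Tens n k
  | 0 => fun y _ => f y
  | k + 1 => covD g t (covIterS g t f k)

/-- Iterated covariant derivative of a one-form: `covIterV g t w k = ∇^k w`,
with the outermost derivative index first and the original index last. -/
def covIterV {n : ℕ} (g : ℝ → (Fin n → ℝ) → Matrix (Fin n) (Fin n) ℝ) (t : ℝ)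
    (w : Tens n 1) : (k : ℕ) → Tens n (k + 1)
  | 0 => w
  | k + 1 => covD g t (covIterV g t w k)

/-! ### Iterated covariant derivatives in a commuting frame -/

/-- The algebraic data behind a flat metric pulled back by a flow `x`: `J a i = ∂x^i/∂y^a`, the
Eulerian derivations `D i = ∂/∂x^i` (which commute), the Lagrangian ones `X a = ∂/∂y^a`, the
material derivative `T`, the velocity components `V i` and the Christoffel symbols
`G e a b = Γ^e_{ab}`. -/
structure Frame (n : ℕ) (C : Type) [CommRing C] [Algebra ℝ C] where
  J : Fin n → Fin n → C
  G : Fin n → Fin n → Fin n → C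
  V : Fin n → C
  D : Fin n → Derivation ℝ C C
  X : Fin n → Derivation ℝ C C
  T : Derivation ℝ C C
  comm : ∀ i j f, D i (D j f) = D j (D i f)
  X_eq : ∀ a f, X a f = ∑ i, J a i * D i f
  XJ : ∀ a b i, X a (J b i) = ∑ e, G e a b * J e i
  TJ : ∀ a i, T (J a i) = ∑ j, J a j * D j (V i)
  TD : ∀ i f, T (D i f) = D i (T f) - ∑ k, D i (V k) * D k f

namespace Frame

variable {n : ℕ} {C : Type} [CommRing C] [Algebra ℝ C] (F : Frame n C)

/-- Prepend one covariant derivative index `a` to an operator `φ`: the factor `J` stays outside,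
so that it is not differentiated by the Eulerian derivations inside `φ`. -/
def step (a : Fin n) (φ : C → C) : C → C := fun f => ∑ i, F.J a i * φ (F.D i f)

instance : LeftCommutative F.step where
  left_comm a b φ := by
    funext f
    simp only [step, Finset.mul_sum]
    rw [Finset.sum_comm]
    refine Finset.sum_congr rfl fun i _ => Finset.sum_congr rfl fun j _ => ?_
    rw [F.comm]; ring

/-- `F.nab m f` is the component of the iterated covariant derivative of the scalar `f` on the
multiset `m` of lower Lagrangian indices, that is
`∑ J_{a₁}^{i₁} ⋯ J_{a_k}^{i_k} D_{i₁} ⋯ D_{i_k} f`. -/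
def nab (m : Multiset (Fin n)) : C → C := m.foldr F.step id

lemma nab_cons (a : Fin n) (m : Multiset (Fin n)) (f : C) :
    F.nab (a ::ₘ m) f = ∑ i, F.J a i * F.nab m (F.D i f) := by
  simp [nab, step]

lemma nab_add (m : Multiset (Fin n)) (f g : C) : F.nab m (f + g) = F.nab m f + F.nab m g := by
  induction m using Multiset.induction generalizing f g with
  | empty => rfl
  | cons a m ih => simp only [nab_cons, map_add, ih, mul_add, Finset.sum_add_distrib]

/-- `F.nab m` as a homomorphism of additive groups. -/
def nabHom (m : Multiset (Fin n)) : C →+ C := AddMonoidHom.mk' (F.nab m) (F.nab_add m)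

lemma nab_sum {ι : Type*} (m : Multiset (Fin n)) (s : Finset ι) (f : ι → C) :
    F.nab m (∑ k ∈ s, f k) = ∑ k ∈ s, F.nab m (f k) := map_sum (F.nabHom m) f s

lemma nab_sub (m : Multiset (Fin n)) (f g : C) : F.nab m (f - g) = F.nab m f - F.nab m g :=
  map_sub (F.nabHom m) f g

section Sub

variable {ι : Type} [DecidableEq ι] (I : ι → Fin n)

/-- The iterated covariant derivative on the indices `I m`, `m ∈ S`. -/
def nabS (S : Finset ι) : C → C := F.nab (S.val.map I)

omit [DecidableEq ι] in
lemma nabS_empty (f : C) : F.nabS I ∅ f = f := rfl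

lemma nabS_insert {a : ι} {S : Finset ι} (h : a ∉ S) (f : C) :
    F.nabS I (insert a S) f = ∑ i, F.J (I a) i * F.nabS I S (F.D i f) := by
  rw [nabS, Finset.insert_val_of_notMem h, Multiset.map_cons, nab_cons]; rfl

lemma nabS_mul (S : Finset ι) (f g : C) :
    F.nabS I S (f * g) = ∑ U ∈ S.powerset, F.nabS I U f * F.nabS I (S \ U) g := by
  induction S using Finset.induction generalizing f g with
  | empty => simp [nabS_empty]
  | insert a S ha ih =>
    have h1 : ∀ U ∈ S.powerset, F.nabS I U f * F.nabS I (insert a S \ U) g =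
        ∑ i, F.J (I a) i * (F.nabS I U f * F.nabS I (S \ U) (F.D i g)) := fun U hU => by
      have hU' := Finset.mem_powerset.mp hU
      rw [Finset.insert_sdiff_of_notMem _ fun h => ha (hU' h),
        nabS_insert _ _ (fun h => ha (Finset.mem_sdiff.mp h).1), Finset.mul_sum]
      exact Finset.sum_congr rfl fun i _ => by ring
    have h2 : ∀ U ∈ S.powerset, F.nabS I (insert a U) f * F.nabS I (insert a S \ insert a U) g =
        ∑ i, F.J (I a) i * (F.nabS I U (F.D i f) * F.nabS I (S \ U) g) := fun U hU => by
      have hU' := Finset.mem_powerset.mp hU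
      rw [Finset.insert_sdiff_insert, Finset.sdiff_insert_of_notMem ha,
        nabS_insert _ _ (fun h => ha (hU' h)), Finset.sum_mul]
      exact Finset.sum_congr rfl fun i _ => by ring
    rw [Finset.sum_powerset_insert ha, nabS_insert _ _ ha, Finset.sum_congr rfl h1,
      Finset.sum_congr rfl h2, Finset.sum_comm, Finset.sum_comm (s := S.powerset),
      ← Finset.sum_add_distrib]
    refine Finset.sum_congr rfl fun i _ => ?_
    rw [← Finset.mul_sum, ← Finset.mul_sum, ← mul_add, Derivation.leibniz, smul_eq_mul, smul_eq_mul,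
      mul_comm g, show F.nabS I S (_ + _) = F.nabS I S _ + F.nabS I S _ from F.nab_add _ _ _,
      ih, ih]

/-- The bilinear expression `∑_k ∇_U V_k · ∇_W D_k f`, the contraction of `∇^{|U|} u` with
`∇^{|W|+1} f`. -/
def pair (U W : Finset ι) (f : C) : C := ∑ k, F.nabS I U (F.V k) * F.nabS I W (F.D k f)

lemma pair_insert_left {a : ι} {U : Finset ι} (h : a ∉ U) (W : Finset ι) (f : C) :
    F.pair I (insert a U) W f =
      ∑ k, ∑ i, F.J (I a) i * (F.nabS I U (F.D i (F.V k)) * F.nabS I W (F.D k f)) := by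
  refine Finset.sum_congr rfl fun k _ => ?_
  rw [nabS_insert _ _ h, Finset.sum_mul]
  exact Finset.sum_congr rfl fun i _ => by ring

lemma pair_insert_right {a : ι} {W : Finset ι} (h : a ∉ W) (U : Finset ι) (f : C) :
    F.pair I U (insert a W) f = ∑ i, F.J (I a) i * F.pair I U W (F.D i f) := by
  simp only [pair, Finset.mul_sum]
  rw [Finset.sum_comm]
  refine Finset.sum_congr rfl fun k _ => ?_
  rw [nabS_insert _ _ h, Finset.mul_sum]
  exact Finset.sum_congr rfl fun i _ => by rw [F.comm]; ring

/-- The commutator of the material derivative with the iterated covariant derivative: a sum over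
all ways of distributing at least two of the indices to the velocity. -/
lemma T_nabS (S : Finset ι) (f : C) :
    F.T (F.nabS I S f) = F.nabS I S (F.T f) -
      ∑ U ∈ S.powerset, if 2 ≤ U.card then F.pair I U (S \ U) f else 0 := by
  induction S using Finset.induction generalizing f with
  | empty => simp [nabS_empty]
  | insert a S ha ih =>
    have hsub : ∀ {U}, U ∈ S.powerset → a ∉ U := fun hU h => ha (Finset.mem_powerset.mp hU h)
    -- subsets not containing `a`
    have h1 : ∀ U ∈ S.powerset,
        (if 2 ≤ U.card then F.pair I U (insert a S \ U) f else 0) =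
          ∑ i, F.J (I a) i * (if 2 ≤ U.card then F.pair I U (S \ U) (F.D i f) else 0) := by
      intro U hU
      rw [Finset.insert_sdiff_of_notMem _ (hsub hU)]
      split_ifs with h
      · exact F.pair_insert_right I (fun h => ha (Finset.mem_sdiff.mp h).1) U f
      · simp
    -- subsets containing `a`; only the singleton, from `U = ∅`, fails the cardinality condition
    have h2 : ∀ U ∈ S.powerset,
        (if 2 ≤ (insert a U).card then F.pair I (insert a U) (insert a S \ insert a U) f else 0) =
          F.pair I (insert a U) (S \ U) f -
            if U = ∅ then F.pair I (insert a ∅) S f else 0 := by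
      intro U hU
      rw [Finset.insert_sdiff_insert, Finset.sdiff_insert_of_notMem ha,
        Finset.card_insert_of_notMem (hsub hU)]
      rcases U.eq_empty_or_nonempty with rfl | h
      · simp
      · have := h.card_pos
        rw [if_pos (by omega), if_neg h.ne_empty, sub_zero]
    have h3 : ∑ U ∈ S.powerset, F.pair I (insert a U) (S \ U) f =
        ∑ i, F.J (I a) i * ∑ k, F.nabS I S (F.D i (F.V k) * F.D k f) := by
      rw [Finset.sum_congr rfl fun U hU => F.pair_insert_left I (hsub hU) (S \ U) f]
      simp only [nabS_mul, Finset.mul_sum]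
      rw [Finset.sum_comm]
      conv_rhs => rw [Finset.sum_comm]
      refine Finset.sum_congr rfl fun k _ => ?_
      rw [Finset.sum_comm]
    have h4 : F.pair I (insert a ∅) S f = ∑ i, F.T (F.J (I a) i) * F.nabS I S (F.D i f) := by
      rw [F.pair_insert_left I (by simp)]
      refine Finset.sum_congr rfl fun i _ => ?_
      rw [F.TJ, Finset.sum_mul]
      exact Finset.sum_congr rfl fun j _ => by rw [nabS_empty]; ring
    have h5 : ∀ i, F.nabS I S (F.T (F.D i f)) =
        F.nabS I S (F.D i (F.T f)) - ∑ k, F.nabS I S (F.D i (F.V k) * F.D k f) := fun i => by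
      rw [F.TD, nabS, nab_sub, nab_sum]
    rw [Finset.sum_powerset_insert ha, Finset.sum_congr rfl h1, Finset.sum_congr rfl h2,
      Finset.sum_sub_distrib, h3, Finset.sum_ite_eq' _ ∅, if_pos (Finset.empty_mem_powerset S), h4,
      nabS_insert _ _ ha, nabS_insert _ _ ha, map_sum, Finset.sum_comm (s := S.powerset)]
    simp only [Derivation.leibniz, smul_eq_mul, ih, h5, ← Finset.mul_sum]
    rw [← sub_eq_zero]
    simp only [← Finset.sum_add_distrib, ← Finset.sum_sub_distrib]
    exact Finset.sum_eq_zero fun i _ => by ring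

/-- A Lagrangian derivative of the components `∇_S f` is the component of one more covariant
derivative, plus the Christoffel corrections on each of the indices in `S`. -/
lemma X_nabS (b : Fin n) (S : Finset ι) (f : C) :
    F.X b (F.nabS I S f) = F.nab (b ::ₘ S.val.map I) f +
      ∑ m ∈ S, ∑ e, F.G e b (I m) * F.nabS (Function.update I m e) S f := by
  induction S using Finset.induction generalizing f with
  | empty =>
    rw [nabS_empty, Finset.sum_empty, add_zero, Finset.empty_val, Multiset.map_zero, nab_cons,
      F.X_eq]
    rfl
  | insert a S ha ih =>
    have h1 : ∀ e, F.nabS (Function.update I a e) (insert a S) f =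
        ∑ i, F.J e i * F.nabS I S (F.D i f) := fun e => by
      rw [nabS_insert _ _ ha, Function.update_self]
      refine Finset.sum_congr rfl fun i _ => ?_
      rw [nabS, nabS, Multiset.map_congr rfl fun x hx =>
        Function.update_of_ne (ne_of_mem_of_not_mem hx ha) e I]
    have h2 : ∀ m ∈ S, ∀ e, F.nabS (Function.update I m e) (insert a S) f =
        ∑ i, F.J (I a) i * F.nabS (Function.update I m e) S (F.D i f) := fun m hm e => by
      rw [nabS_insert _ _ ha, Function.update_of_ne (ne_of_mem_of_not_mem hm ha).symm]
    have h3 : ∑ m ∈ S, ∑ e, F.G e b (I m) * F.nabS (Function.update I m e) (insert a S) f =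
        ∑ i, F.J (I a) i *
          ∑ m ∈ S, ∑ e, F.G e b (I m) * F.nabS (Function.update I m e) S (F.D i f) := by
      simp only [Finset.mul_sum]
      conv_rhs => rw [Finset.sum_comm]
      refine Finset.sum_congr rfl fun m hm => ?_
      conv_rhs => rw [Finset.sum_comm]
      refine Finset.sum_congr rfl fun e _ => ?_
      rw [h2 m hm, Finset.mul_sum]
      exact Finset.sum_congr rfl fun i _ => by ring
    have h4 : ∑ e, F.G e b (I a) * F.nabS (Function.update I a e) (insert a S) f =
        ∑ i, F.X b (F.J (I a) i) * F.nabS I S (F.D i f) := by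
      simp only [h1, F.XJ, Finset.mul_sum, Finset.sum_mul]
      rw [Finset.sum_comm]
      exact Finset.sum_congr rfl fun i _ => Finset.sum_congr rfl fun e _ => by ring
    rw [Finset.sum_insert ha, h3, h4, nabS_insert _ _ ha, map_sum,
      Finset.insert_val_of_notMem ha, Multiset.map_cons, Multiset.cons_swap, nab_cons]
    simp only [Derivation.leibniz, smul_eq_mul, ih, ← Finset.sum_add_distrib]
    exact Finset.sum_congr rfl fun i _ => by ring

/-- The analogue of `X_nabS` for the components `∑_i J_c^i ∇_S w_i` of the iterated covariant
derivative of a one-form, whose own index `c` receives one more Christoffel correction. -/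
lemma X_oneForm (b c : Fin n) (S : Finset ι) (w : Fin n → C) :
    F.X b (∑ i, F.J c i * F.nabS I S (w i)) =
      ∑ i, F.J c i * F.nab (b ::ₘ S.val.map I) (w i) +
      (∑ m ∈ S, ∑ e, F.G e b (I m) * ∑ i, F.J c i * F.nabS (Function.update I m e) S (w i) +
        ∑ e, F.G e b c * ∑ i, F.J e i * F.nabS I S (w i)) := by
  have h1 : ∑ m ∈ S, ∑ e, F.G e b (I m) * ∑ i, F.J c i * F.nabS (Function.update I m e) S (w i) =
      ∑ i, F.J c i *
        ∑ m ∈ S, ∑ e, F.G e b (I m) * F.nabS (Function.update I m e) S (w i) := by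
    simp only [Finset.mul_sum]
    conv_rhs => rw [Finset.sum_comm]
    refine Finset.sum_congr rfl fun m _ => ?_
    conv_rhs => rw [Finset.sum_comm]
    exact Finset.sum_congr rfl fun e _ => Finset.sum_congr rfl fun i _ => by ring
  have h2 : ∑ e, F.G e b c * ∑ i, F.J e i * F.nabS I S (w i) =
      ∑ i, F.X b (F.J c i) * F.nabS I S (w i) := by
    simp only [F.XJ, Finset.mul_sum, Finset.sum_mul]
    rw [Finset.sum_comm]
    exact Finset.sum_congr rfl fun i _ => Finset.sum_congr rfl fun e _ => by ring
  rw [h1, h2, map_sum, ← Finset.sum_add_distrib, ← Finset.sum_add_distrib]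
  refine Finset.sum_congr rfl fun i _ => ?_
  rw [Derivation.leibniz, X_nabS, smul_eq_mul, smul_eq_mul]
  ring

end Sub

end Frame

/-! ### The frame of a flow -/

section Build

variable {n : ℕ} {C : Type} [CommRing C] [Algebra ℝ C]

/-- The frame determined by commuting Lagrangian derivations `X a` and `T`, the flow components
`x i` and an inverse `A` of the Jacobian `(X a (x i))`. -/
def Frame.ofFlow (X : Fin n → Derivation ℝ C C) (T : Derivation ℝ C C) (x : Fin n → C)
    (A : Matrix (Fin n) (Fin n) C)
    (hX : ∀ a b f, X a (X b f) = X b (X a f)) (hT : ∀ a f, T (X a f) = X a (T f))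
    (hJA : (Matrix.of fun a i => X a (x i)) * A = 1) : Frame n C :=
  have hAJ : A * (Matrix.of fun a i => X a (x i)) = 1 := mul_eq_one_comm.mp hJA
  have hJA' : ∀ a b, ∑ i, X a (x i) * A i b = (1 : Matrix (Fin n) (Fin n) C) a b := fun a b => by
    rw [← hJA, Matrix.mul_apply]; rfl
  have hAJ' : ∀ i j, ∑ a, A i a * X a (x j) = (1 : Matrix (Fin n) (Fin n) C) i j := fun a b => by
    rw [← hAJ, Matrix.mul_apply]; rfl
  have hone : ∀ (E : Derivation ℝ C C) i j, E ((1 : Matrix (Fin n) (Fin n) C) i j) = 0 :=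
    fun E i j => by
      rw [Matrix.one_apply]; split_ifs
      · exact E.map_one_eq_zero
      · exact map_zero E
  -- a combination of the `X b` that kills all the `x l` vanishes
  have van : ∀ c : Fin n → C, (∀ l, ∑ b, c b * X b (x l) = 0) → ∀ f, ∑ b, c b * X b f = 0 := by
    intro c hc f
    have h0 : c = 0 := by
      have h1 : Matrix.vecMul c (Matrix.of fun a i => X a (x i)) = 0 := by
        funext l; simpa [Matrix.vecMul, dotProduct] using hc l
      have h2 := congrArg (fun w => Matrix.vecMul w A) h1
      simpa [Matrix.vecMul_vecMul, hJA] using h2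
    simp [h0]
  have Dapp : ∀ i f, (∑ a, A i a • X a) f = ∑ a, A i a * X a f := fun i f => by
    rw [← Derivation.coeFnAddMonoidHom_apply, map_sum, Finset.sum_apply]; rfl
  have Dx : ∀ i j, (∑ a, A i a • X a) (x j) = (1 : Matrix (Fin n) (Fin n) C) i j := fun i j => by
    rw [Dapp, hAJ']
  have DD : ∀ i j f, (∑ a, A i a • X a) ((∑ a, A j a • X a) f) =
      ∑ b, (∑ a, A i a • X a) (A j b) * X b f + ∑ a, ∑ b, A i a * A j b * X a (X b f) := by
    intro i j f
    rw [Dapp j, map_sum, Finset.sum_comm, ← Finset.sum_add_distrib]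
    refine Finset.sum_congr rfl fun b _ => ?_
    rw [Derivation.leibniz, Dapp i (X b f), smul_eq_mul, smul_eq_mul, Finset.mul_sum, add_comm,
      mul_comm (X b f)]
    congr 1
    exact Finset.sum_congr rfl fun a _ => by ring
  have DDs : ∀ i j f, (∑ a, A i a • X a) ((∑ a, A j a • X a) f) -
      (∑ a, A j a • X a) ((∑ a, A i a • X a) f) =
      ∑ b, ((∑ a, A i a • X a) (A j b) - (∑ a, A j a • X a) (A i b)) * X b f := by
    intro i j f
    have : ∑ a, ∑ b, A i a * A j b * X a (X b f) = ∑ a, ∑ b, A j a * A i b * X a (X b f) := by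
      rw [Finset.sum_comm]
      exact Finset.sum_congr rfl fun a _ => Finset.sum_congr rfl fun b _ => by rw [hX]; ring
    rw [DD, DD, this]
    simp only [sub_mul, Finset.sum_sub_distrib]
    ring
  have TDs : ∀ i f, T ((∑ a, A i a • X a) f) - (∑ a, A i a • X a) (T f) +
      ∑ k, (∑ a, A i a • X a) (T (x k)) * (∑ a, A k a • X a) f =
      ∑ b, (T (A i b) + ∑ k, (∑ a, A i a • X a) (T (x k)) * A k b) * X b f := by
    intro i f
    have h1 : ∑ k, (∑ a, A i a • X a) (T (x k)) * (∑ a, A k a • X a) f =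
        ∑ b, (∑ k, (∑ a, A i a • X a) (T (x k)) * A k b) * X b f := by
      simp only [Finset.sum_mul, Dapp _ f, Finset.mul_sum]
      rw [Finset.sum_comm]
      exact Finset.sum_congr rfl fun a _ => Finset.sum_congr rfl fun b _ => by ring
    have h2 : T ((∑ a, A i a • X a) f) - (∑ a, A i a • X a) (T f) = ∑ b, T (A i b) * X b f := by
      rw [Dapp, Dapp, map_sum, ← Finset.sum_sub_distrib]
      refine Finset.sum_congr rfl fun b _ => ?_
      rw [Derivation.leibniz, hT, smul_eq_mul, smul_eq_mul]; ring
    rw [h1, h2, ← Finset.sum_add_distrib]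
    exact Finset.sum_congr rfl fun b _ => by ring
  { J := fun a i => X a (x i)
    G := fun e a b => ∑ i, A i e * X a (X b (x i))
    V := fun i => T (x i)
    D := fun i => ∑ a, A i a • X a
    X := X
    T := T
    comm := fun i j f => by
      rw [← sub_eq_zero, DDs]
      refine van _ (fun l => ?_) f
      rw [← DDs, Dx, Dx, hone, hone, sub_zero]
    X_eq := fun a f => by
      simp only [Dapp, Finset.mul_sum]
      rw [Finset.sum_comm]
      simp only [← mul_assoc, ← Finset.sum_mul, hJA']
      simp [Matrix.one_apply]
    XJ := fun a b i => by
      simp only [Finset.sum_mul]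
      rw [Finset.sum_comm]
      have : ∀ y, ∑ e, A y e * X a (X b (x y)) * X e (x i) =
          (1 : Matrix (Fin n) (Fin n) C) y i * X a (X b (x y)) := fun y => by
        rw [← hAJ', Finset.sum_mul]
        exact Finset.sum_congr rfl fun e _ => by ring
      simp [this, Matrix.one_apply]
    TJ := fun a i => by
      rw [hT]
      simp only [Dapp, Finset.mul_sum]
      rw [Finset.sum_comm]
      simp only [← mul_assoc, ← Finset.sum_mul, hJA']
      simp [Matrix.one_apply]
    TD := fun i f => by
      have h : T ((∑ a, A i a • X a) f) - (∑ a, A i a • X a) (T f) +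
          ∑ k, (∑ a, A i a • X a) (T (x k)) * (∑ a, A k a • X a) f = 0 := by
        rw [TDs]
        refine van _ (fun l => ?_) f
        rw [← TDs, Dx, hone]
        simp [Dx, Matrix.one_apply]
      linear_combination h }

end Build

/-! ### Averaging over permutations -/

/-- Summing over the position of a fixed-size block under all permutations counts every subset of
that size equally often. -/
lemma sum_perm_map {r : ℕ} (S : Finset (Fin r)) (F : Finset (Fin r) → ℝ) :
    (r.choose S.card : ℝ) * ((r.factorial : ℝ)⁻¹ *
      ∑ σ : Equiv.Perm (Fin r), F (S.map σ.toEmbedding)) =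
      ∑ U ∈ Finset.powersetCard S.card Finset.univ, F U := by
  have h1 : ∀ U ∈ Finset.powersetCard S.card (Finset.univ : Finset (Fin r)),
      ∑ σ : Equiv.Perm (Fin r), F (U.map σ.toEmbedding) =
        ∑ σ : Equiv.Perm (Fin r), F (S.map σ.toEmbedding) := by
    intro U hU
    have hc : U.card = S.card := (Finset.mem_powersetCard.mp hU).2
    obtain ⟨τ, rfl⟩ : ∃ τ : Equiv.Perm (Fin r), U = S.map τ.toEmbedding := by
      let e : {a // a ∈ S} ≃ {a // a ∈ U} := S.equivOfCardEq hc.symm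
      refine ⟨e.extendSubtype, (Finset.eq_of_subset_of_card_le ?_ (by simp [hc])).symm⟩
      intro a ha
      obtain ⟨b, hb, rfl⟩ := Finset.mem_map.mp ha
      exact e.extendSubtype_mem b hb
    refine Fintype.sum_equiv (Equiv.mulRight τ) _ _ fun σ => ?_
    rw [Finset.map_map]; rfl
  have h2 : ∀ σ : Equiv.Perm (Fin r),
      ∑ U ∈ Finset.powersetCard S.card (Finset.univ : Finset (Fin r)), F (U.map σ.toEmbedding) =
        ∑ U ∈ Finset.powersetCard S.card (Finset.univ : Finset (Fin r)), F U := by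
    intro σ
    refine Finset.sum_bij' (fun U _ => U.map σ.toEmbedding) (fun U _ => U.map σ.symm.toEmbedding)
      ?_ ?_ ?_ ?_ ?_ <;> simp [Finset.mem_powersetCard, Finset.map_map]
  have h3 := Finset.sum_congr rfl h1
  rw [Finset.sum_comm, Finset.sum_congr rfl fun σ _ => h2 σ] at h3
  simp only [Finset.sum_const, Finset.card_powersetCard, Finset.card_univ, Fintype.card_perm,
    Fintype.card_fin, nsmul_eq_mul] at h3
  have : (r.factorial : ℝ) ≠ 0 := by exact_mod_cast r.factorial_ne_zero
  rw [mul_left_comm, ← h3, inv_mul_cancel_left₀ this]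

/-! ### Smooth functions of time and Lagrangian coordinates -/

open scoped ContDiff

/-- The algebra of smooth real functions of `(t, y) ∈ ℝ × ℝⁿ`. -/
def Smooth (n : ℕ) : Subalgebra ℝ (ℝ × (Fin n → ℝ) → ℝ) where
  carrier := {f | ContDiff ℝ ∞ f}
  mul_mem' {f g} (hf : ContDiff ℝ ∞ f) (hg : ContDiff ℝ ∞ g) :=
    show ContDiff ℝ ∞ (fun p => f p * g p) from hf.mul hg
  add_mem' {f g} (hf : ContDiff ℝ ∞ f) (hg : ContDiff ℝ ∞ g) :=
    show ContDiff ℝ ∞ (fun p => f p + g p) from hf.add hg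
  algebraMap_mem' c := show ContDiff ℝ ∞ (fun _ => c) from contDiff_const

namespace Smooth

variable {n : ℕ}

lemma smooth (f : Smooth n) : ContDiff ℝ ∞ f.1 := f.2

lemma diff (f : Smooth n) : Differentiable ℝ f.1 := (smooth f).differentiable (by simp)

lemma smooth_fderiv (f : Smooth n) : ContDiff ℝ ∞ (fderiv ℝ f.1) :=
  (smooth f).fderiv_right (by simp)

/-- Differentiation in a fixed direction `e` of space-time. -/
def dir (e : ℝ × (Fin n → ℝ)) : Derivation ℝ (Smooth n) (Smooth n) where
  toFun f := ⟨fun p => fderiv ℝ f.1 p e,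
    show ContDiff ℝ ∞ _ from (smooth_fderiv f).clm_apply contDiff_const⟩
  map_add' f g := Subtype.ext <| funext fun p => by
    change fderiv ℝ (f.1 + g.1) p e = fderiv ℝ f.1 p e + fderiv ℝ g.1 p e
    rw [fderiv_add (diff f p) (diff g p)]; rfl
  map_smul' c f := Subtype.ext <| funext fun p => by
    change fderiv ℝ (c • f.1) p e = c • fderiv ℝ f.1 p e
    rw [fderiv_const_smul (diff f p)]; rfl
  map_one_eq_zero' := Subtype.ext <| funext fun p => by
    change fderiv ℝ (fun _ => (1 : ℝ)) p e = 0
    simp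
  leibniz' f g := Subtype.ext <| funext fun p => by
    change fderiv ℝ (f.1 * g.1) p e = f.1 p * fderiv ℝ g.1 p e + g.1 p * fderiv ℝ f.1 p e
    rw [fderiv_mul (diff f p) (diff g p)]; rfl

lemma dir_apply (e : ℝ × (Fin n → ℝ)) (f : Smooth n) (p) : (dir e f).1 p = fderiv ℝ f.1 p e := rfl

lemma dir_comm (e e₂ : ℝ × (Fin n → ℝ)) (f : Smooth n) : dir e (dir e₂ f) = dir e₂ (dir e f) := by
  refine Subtype.ext <| funext fun p => ?_
  have hd : DifferentiableAt ℝ (fderiv ℝ f.1) p :=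
    (smooth_fderiv f).differentiable (by simp) p
  have key : ∀ a b, (dir a (dir b f)).1 p = fderiv ℝ (fderiv ℝ f.1) p a b := fun a b => by
    rw [dir_apply]
    change fderiv ℝ (fun p => fderiv ℝ f.1 p b) p a = _
    rw [fderiv_clm_apply hd (differentiableAt_const b)]
    simp
  rw [key, key]
  exact (smooth f).contDiffAt.isSymmSndFDerivAt
    (by rw [minSmoothness_of_isRCLikeNormedField]; exact WithTop.coe_le_coe.2 (le_top : (2 : ℕ∞) ≤ ⊤)) e e₂

/-- Evaluation at the point `(t, y)`. -/
def ev (t : ℝ) (y : Fin n → ℝ) : Smooth n →+* ℝ :=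
  (Pi.evalRingHom (fun _ => ℝ) (t, y)).comp (Smooth n).val.toRingHom

/-- The Lagrangian derivation `∂/∂y^a`. -/
abbrev dX (a : Fin n) : Derivation ℝ (Smooth n) (Smooth n) := dir (0, Pi.single a 1)

/-- The material derivative, which is `∂/∂t` in Lagrangian coordinates. -/
abbrev dT : Derivation ℝ (Smooth n) (Smooth n) := dir (1, 0)

lemma pd_ev (f : Smooth n) (a : Fin n) (t : ℝ) (y : Fin n → ℝ) :
    pd a (fun z => ev t z f) y = ev t y (dX a f) := by
  have h : HasFDerivAt (fun z : Fin n → ℝ => f.1 (t, z)) _ y :=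
    (diff f (t, y)).hasFDerivAt.comp y (hasFDerivAt_prodMk_right t y)
  change fderiv ℝ (fun z : Fin n → ℝ => f.1 (t, z)) y _ = fderiv ℝ f.1 (t, y) _
  rw [h.fderiv]; simp

lemma deriv_ev (f : Smooth n) (t : ℝ) (y : Fin n → ℝ) :
    deriv (fun s => ev s y f) t = ev t y (dT f) := by
  have h : HasDerivAt (fun s : ℝ => f.1 (s, y)) _ t :=
    (diff f (t, y)).hasFDerivAt.comp_hasDerivAt t ((hasDerivAt_id t).prodMk (hasDerivAt_const t y))
  change deriv (fun s : ℝ => f.1 (s, y)) t = fderiv ℝ f.1 (t, y) _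
  rw [h.deriv]

lemma isUnit_of_ne_zero (f : Smooth n) (h : ∀ t y, ev t y f ≠ 0) : IsUnit f := by
  have hi : ContDiff ℝ ∞ (fun p => (f.1 p)⁻¹) := (smooth f).inv fun p => h p.1 p.2
  refine IsUnit.of_mul_eq_one ⟨_, hi⟩ (Subtype.ext <| funext fun p => ?_)
  exact mul_inv_cancel₀ (h p.1 p.2)

end Smooth

/-! ### Components of the tensors as evaluations in the frame -/

section Flow

open Smooth

variable {n : ℕ} (xx : Fin n → Smooth n)

/-- The Jacobian matrix `∂x^i/∂y^a`. -/
def jac : Matrix (Fin n) (Fin n) (Smooth n) := Matrix.of fun a i => dX a (xx i)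

/-- A function of `(t, y)` with values in `ℝⁿ`, from its components. -/
abbrev toFlow (t : ℝ) (y : Fin n → ℝ) : Fin n → ℝ := fun i => ev t y (xx i)

lemma gmat_eq (t : ℝ) (y : Fin n → ℝ) :
    gmat (toFlow xx) t y = (jac xx).map (ev t y) * ((jac xx).map (ev t y)).transpose := by
  ext a b
  simp only [gmat, Matrix.of_apply, Matrix.mul_apply, Matrix.transpose_apply, Matrix.map_apply, jac,
    toFlow, pd_ev]

/-- The entries of the metric as smooth functions. -/
def gS (a b : Fin n) : Smooth n := ∑ i, dX a (xx i) * dX b (xx i)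

lemma gmat_ev (t : ℝ) (y : Fin n → ℝ) (a b : Fin n) :
    gmat (toFlow xx) t y a b = ev t y (gS xx a b) := by
  simp only [gmat, Matrix.of_apply, gS, map_sum, map_mul, toFlow, pd_ev]

lemma isUnit_jac (hdet : ∀ t y, IsUnit (gmat (toFlow xx) t y).det) : IsUnit (jac xx).det := by
  refine isUnit_of_ne_zero _ fun t y h => ?_
  have h1 := hdet t y
  have h2 : ((jac xx).map (ev t y)).det = 0 := by
    rw [← h, RingHom.map_det]; rfl
  rw [gmat_eq, Matrix.det_mul, h2, zero_mul] at h1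
  exact not_isUnit_zero h1

variable (hU : IsUnit (jac xx).det)

/-- The frame of the flow `xx`. -/
def flowFrame : Frame n (Smooth n) :=
  Frame.ofFlow dX dT xx (jac xx)⁻¹ (fun _ _ _ => dir_comm _ _ _) (fun _ _ => dir_comm _ _ _)
    (Matrix.mul_nonsing_inv _ hU)

/-- The inverse Jacobian at a point. -/
def invJ (t : ℝ) (y : Fin n → ℝ) : Matrix (Fin n) (Fin n) ℝ := ((jac xx)⁻¹).map (ev t y)

include hU in
lemma jac_mul_inv (t : ℝ) (y : Fin n → ℝ) : (jac xx).map (ev t y) * invJ xx t y = 1 := by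
  rw [invJ, ← Matrix.map_mul, Matrix.mul_nonsing_inv _ hU]
  exact Matrix.map_one _ (map_zero _) (map_one _)

include hU in
lemma gmat_inv (t : ℝ) (y : Fin n → ℝ) :
    (gmat (toFlow xx) t y)⁻¹ = (invJ xx t y).transpose * invJ xx t y := by
  refine Matrix.inv_eq_right_inv ?_
  have h := jac_mul_inv xx hU t y
  rw [gmat_eq, Matrix.mul_assoc, ← Matrix.mul_assoc (Matrix.transpose _), ← Matrix.transpose_mul,
    mul_eq_one_comm.mp h, Matrix.transpose_one, Matrix.one_mul, h]

include hU in
/-- Contracting both indices of `g⁻¹` with the Jacobian gives the Euclidean metric. -/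
lemma ginv_contract (t : ℝ) (y : Fin n → ℝ) (k l : Fin n) :
    ∑ e, ∑ f, (gmat (toFlow xx) t y)⁻¹ e f * ev t y (dX e (xx k)) * ev t y (dX f (xx l)) =
      (1 : Matrix (Fin n) (Fin n) ℝ) k l := by
  have h := mul_eq_one_comm.mp (jac_mul_inv xx hU t y)
  have h' : ((jac xx).map (ev t y)).transpose * (gmat (toFlow xx) t y)⁻¹ *
      (jac xx).map (ev t y) = 1 := by
    rw [gmat_inv xx hU, ← Matrix.mul_assoc, ← Matrix.transpose_mul, h, Matrix.transpose_one,
      Matrix.one_mul, h]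
  rw [← h']
  simp only [Matrix.mul_apply, Matrix.transpose_apply, Matrix.map_apply, jac, Matrix.of_apply,
    Finset.sum_mul]
  rw [Finset.sum_comm]
  exact Finset.sum_congr rfl fun e _ => Finset.sum_congr rfl fun f _ => by ring

lemma Gamma_ev (t : ℝ) (y : Fin n → ℝ) (e a b : Fin n) :
    Gamma (gmat (toFlow xx)) t y e a b = ev t y ((flowFrame xx hU).G e a b) := by
  have hd : ∀ d, pd a (fun z => gmat (toFlow xx) t z b d) y +
      pd b (fun z => gmat (toFlow xx) t z a d) y - pd d (fun z => gmat (toFlow xx) t z a b) y =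
      2 * ∑ i, ev t y (dX a (dX b (xx i))) * ev t y (dX d (xx i)) := by
    intro d
    simp only [gmat_ev, pd_ev, ← map_mul, ← map_sum]
    rw [← map_add, ← map_sub, ← map_ofNat (ev t y) 2, ← map_mul]
    congr 1
    simp only [gS, map_sum, Derivation.leibniz, smul_eq_mul, Finset.mul_sum]
    rw [← Finset.sum_add_distrib, ← Finset.sum_sub_distrib]
    refine Finset.sum_congr rfl fun i _ => ?_
    rw [dir_comm (0, Pi.single b 1) (0, Pi.single a 1), dir_comm (0, Pi.single d 1) (0, Pi.single a 1),
      dir_comm (0, Pi.single d 1) (0, Pi.single b 1)]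
    ring
  have hg : ∀ i, ∑ d, (gmat (toFlow xx) t y)⁻¹ e d * ev t y (dX d (xx i)) = invJ xx t y i e := by
    intro i
    have h := jac_mul_inv xx hU t y
    have h' : (gmat (toFlow xx) t y)⁻¹ * (jac xx).map (ev t y) = (invJ xx t y).transpose := by
      rw [gmat_inv xx hU, Matrix.mul_assoc, mul_eq_one_comm.mp h, Matrix.mul_one]
    exact congrFun (congrFun h' e) i
  have hG : ev t y ((flowFrame xx hU).G e a b) =
      ∑ i, invJ xx t y i e * ev t y (dX a (dX b (xx i))) := by
    change ev t y (∑ i, (jac xx)⁻¹ i e * dX a (dX b (xx i))) = _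
    simp only [map_sum, map_mul]; rfl
  rw [Gamma, hG]
  simp only [hd, ← hg, Finset.mul_sum, Finset.sum_mul]
  rw [Finset.sum_comm]
  exact Finset.sum_congr rfl fun e _ => Finset.sum_congr rfl fun f _ => by ring

lemma univ_map_succ {k : ℕ} (J : Fin (k + 1) → Fin n) :
    (Finset.univ.val.map J : Multiset (Fin n)) = J 0 ::ₘ Finset.univ.val.map (Fin.tail J) := by
  simp [Fin.univ_val_map, List.ofFn_succ, Fin.tail_def]

/-- The iterated covariant derivative of a scalar, with its Christoffel corrections, is given by the
Jacobian-weighted Eulerian derivatives. -/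
lemma covIterS_ev (f : Smooth n) (t : ℝ) (k : ℕ) (y : Fin n → ℝ) (I : Fin k → Fin n) :
    covIterS (gmat (toFlow xx)) t (fun z => ev t z f) k y I =
      ev t y ((flowFrame xx hU).nabS I Finset.univ f) := by
  induction k generalizing y with
  | zero => rfl
  | succ k ih =>
    have hX := (flowFrame xx hU).X_nabS (Fin.tail I) (I 0) Finset.univ f
    rw [covIterS, covD]
    simp only [ih, pd_ev, Gamma_ev xx hU]
    rw [show dX (I 0) = (flowFrame xx hU).X (I 0) from rfl, hX, map_add, Frame.nabS, univ_map_succ]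
    simp only [map_sum, map_mul]
    ring

/-- The analogue for the velocity one-form `u_c = ∑_i J_c^i v_i`, whose own index comes last. -/
lemma covIterV_ev (v : ℝ → (Fin n → ℝ) → Fin n → ℝ)
    (hv : ∀ t y i, v t (toFlow xx t y) i = ev t y (dT (xx i)))
    (t : ℝ) (k : ℕ) (y : Fin n → ℝ) (I : Fin (k + 1) → Fin n) :
    covIterV (gmat (toFlow xx)) t (uT (toFlow xx) v t) k y I =
      ev t y (∑ i, dX (I (Fin.last k)) (xx i) *
        (flowFrame xx hU).nabS (Fin.init I) Finset.univ (dT (xx i))) := by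
  induction k generalizing y with
  | zero =>
    simp only [covIterV, uT, uLag, toFlow, pd_ev, map_sum, map_mul]
    exact Finset.sum_congr rfl fun i _ => by rw [hv]; rfl
  | succ k ih =>
    rw [covIterV, covD, Fin.sum_univ_castSucc]
    simp only [ih, pd_ev, Gamma_ev xx hU]
    have hX := (flowFrame xx hU).X_oneForm (Fin.init (Fin.tail I)) (I 0) (I (Fin.last (k + 1)))
      Finset.univ (fun i => dT (xx i))
    have hJ : ∀ a i, (flowFrame xx hU).J a i = dX a (xx i) := fun _ _ => rfl
    simp only [hJ] at hX
    rw [show dX (I 0) = (flowFrame xx hU).X (I 0) from rfl]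
    have hl : Fin.tail I (Fin.last k) = I (Fin.last (k + 1)) := rfl
    have hne : ∀ (m : Fin k) e, Function.update (Fin.tail I) m.castSucc e (Fin.last k) =
        I (Fin.last (k + 1)) := fun m e =>
      Function.update_of_ne (Fin.castSucc_lt_last m).ne' _ _
    have hi : ∀ m : Fin k, Fin.tail I m.castSucc = Fin.init (Fin.tail I) m := fun _ => rfl
    simp only [hl, hne, hi, Fin.init_update_castSucc, Fin.init_update_last, Function.update_self]
    rw [hX, map_add, map_add]
    have hu : ∀ i, (flowFrame xx hU).nabS (Fin.init I) Finset.univ (dT (xx i)) =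
        (flowFrame xx hU).nab (I 0 ::ₘ Finset.univ.val.map (Fin.init (Fin.tail I)))
          (dT (xx i)) := fun i => by
      rw [Frame.nabS, univ_map_succ, Fin.tail_init_eq_init_tail]; rfl
    simp only [hu, ← map_mul, ← map_sum]
    ring

end Flow

/-! ### The symmetrized contraction -/

lemma sum_contract {n : ℕ} (g J : Fin n → Fin n → ℝ) (a b : Fin n → ℝ)
    (h : ∀ k l, ∑ e, ∑ f, g e f * J e k * J f l = (1 : Matrix (Fin n) (Fin n) ℝ) k l) :
    ∑ e, ∑ f, g e f * (∑ i, J e i * a i) * (∑ j, J f j * b j) = ∑ i, a i * b i := by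
  have e1 : ∑ i, a i * b i = ∑ i, ∑ j, ∑ e, ∑ f, g e f * J e i * J f j * (a i * b j) := by
    simp only [← Finset.sum_mul, h]
    simp [Matrix.one_apply]
  have e2 : ∀ e f, g e f * (∑ i, J e i * a i) * (∑ j, J f j * b j) =
      ∑ i, ∑ j, g e f * J e i * J f j * (a i * b j) := fun e f => by
    rw [mul_assoc, Finset.sum_mul_sum, Finset.mul_sum]
    refine Finset.sum_congr rfl fun i _ => ?_
    rw [Finset.mul_sum]
    exact Finset.sum_congr rfl fun j _ => by ring
  simp only [e1, e2]
  exact (Finset.sum_congr rfl fun e _ => Finset.sum_comm).trans (Finset.sum_comm.trans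
    (Finset.sum_congr rfl fun i _ =>
      (Finset.sum_congr rfl fun e _ => Finset.sum_comm).trans Finset.sum_comm))

section Contract

open Smooth

variable {n : ℕ} (xx : Fin n → Smooth n) (hU : IsUnit (jac xx).det)

/-- The metric contraction of the last index of `∇^k u` with the first index of an iterated
covariant derivative of `q`, in the Eulerian frame. -/
lemma contract_ev (v : ℝ → (Fin n → ℝ) → Fin n → ℝ)
    (hv : ∀ t y i, v t (toFlow xx t y) i = ev t y (dT (xx i)))
    (q : Smooth n) (t : ℝ) (y : Fin n → ℝ) {k d : ℕ} (P : Fin k → Fin n)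
    (Q : Fin n → Fin d → Fin n) (m : Multiset (Fin n))
    (hQ : ∀ f, Finset.univ.val.map (Q f) = f ::ₘ m) :
    ∑ e, ∑ f, (gmat (toFlow xx) t y)⁻¹ e f *
        covIterV (gmat (toFlow xx)) t (uT (toFlow xx) v t) k y (Fin.snoc P e) *
        covIterS (gmat (toFlow xx)) t (fun z => ev t z q) d y (Q f) =
      ev t y (∑ i, (flowFrame xx hU).nab (Finset.univ.val.map P) (dT (xx i)) *
        (flowFrame xx hU).nab m ((flowFrame xx hU).D i q)) := by
  have hJ : ∀ a i, (flowFrame xx hU).J a i = dX a (xx i) := fun _ _ => rfl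
  simp only [covIterV_ev xx hU v hv, covIterS_ev xx hU, Frame.nabS, hQ, Frame.nab_cons,
    Fin.snoc_last, Fin.init_snoc, hJ, map_sum, map_mul]
  exact sum_contract _ (fun a i => ev t y (dX a (xx i))) _ _ (ginv_contract xx hU t y)

/-- The indices from position `s + 1` on, headed by `f`, as a multiset. -/
lemma block_map {r s d : ℕ} (hd : s + d = r) (h0 : 0 < d) (hs : s + 1 ≤ r) (K : Fin r → Fin n)
    (f : Fin n) :
    (Finset.univ.val.map (fun m : Fin d => if (m : ℕ) = 0 then f else
        K ⟨s + (m : ℕ), by have := m.isLt; omega⟩) : Multiset (Fin n)) =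
      f ::ₘ (Finset.univ \ Finset.univ.map (Fin.castLEEmb hs)).val.map K := by
  obtain ⟨c, rfl⟩ : ∃ c, d = c + 1 := ⟨d - 1, by omega⟩
  let ψ : Fin c ↪ Fin r := ⟨fun m => ⟨s + (m + 1), by have := m.isLt; omega⟩, fun a b hab => Fin.ext (by
    have := congrArg Fin.val hab
    simpa using this)⟩
  have h : Finset.univ \ Finset.univ.map (Fin.castLEEmb hs) = Finset.univ.map ψ := by
    ext i
    have hψ : ∀ a, ((ψ a : Fin r) : ℕ) = s + (a + 1) := fun _ => rfl
    simp only [Finset.mem_sdiff, Finset.mem_univ, true_and, Finset.mem_map, Fin.castLEEmb_apply,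
      Fin.ext_iff, Fin.val_castLE, hψ]
    constructor
    · intro hi
      have : s + 1 ≤ (i : ℕ) := by
        by_contra hlt
        exact hi ⟨⟨i, by omega⟩, rfl⟩
      refine ⟨⟨i - (s + 1), by have := i.isLt; omega⟩, ?_⟩
      change s + ((i : ℕ) - (s + 1) + 1) = i
      omega
    · rintro ⟨a, ha⟩ ⟨b, hb⟩
      have := b.isLt
      omega
  rw [h, univ_map_succ, Finset.map_val, Multiset.map_map]
  rfl

end Contract

/-- Subsets with at least two elements, grouped by cardinality. -/
lemma sum_two_le_card {r : ℕ} (F : Finset (Fin r) → ℝ) :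
    ∑ U ∈ (Finset.univ : Finset (Fin r)).powerset, (if 2 ≤ U.card then F U else 0) =
      ∑ s ∈ Finset.Icc 1 (r - 1), ∑ U ∈ Finset.powersetCard (s + 1) Finset.univ, F U := by
  have h : ∀ j ∈ Finset.range ((Finset.univ : Finset (Fin r)).card + 1),
      ∑ U ∈ Finset.powersetCard j (Finset.univ : Finset (Fin r)),
        (if 2 ≤ U.card then F U else 0) =
      if 2 ≤ j then ∑ U ∈ Finset.powersetCard j Finset.univ, F U else 0 := by
    intro j _
    rw [Finset.sum_congr rfl fun U hU => by rw [(Finset.mem_powersetCard.mp hU).2]]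
    split_ifs <;> simp
  rw [Finset.sum_powerset, Finset.sum_congr rfl h, ← Finset.sum_filter]
  refine Finset.sum_nbij' (fun j => j - 1) (fun s => s + 1) ?_ ?_ ?_ ?_ ?_
  · intro j hj
    simp only [Finset.mem_filter, Finset.mem_range, Finset.card_univ, Fintype.card_fin] at hj
    rw [Finset.mem_Icc]; omega
  · intro s hs
    simp only [Finset.mem_filter, Finset.mem_range, Finset.card_univ, Fintype.card_fin]
    rw [Finset.mem_Icc] at hs; omega
  · intro j hj
    have := (Finset.mem_filter.mp hj).2
    omega
  · intro s _; rfl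
  · intro j hj
    have := (Finset.mem_filter.mp hj).2
    rw [show j - 1 + 1 = j by omega]

/-- for a scalar `q` and `r ≥ 1`,
`[D_t, ∇^r] q = -∑_{s=1}^{r-1} C(r,s+1) (∇^{s+1}u) ·̃ (∇^{r-s}q)`,
where `·̃` is the (partially) symmetrized contraction of the raised index of
`∇^{s+1}u` with the first index of `∇^{r-s}q` (here realized as the full
symmetrization over the `r` free indices). -/
theorem stmt4 {n : ℕ} (x v : ℝ → (Fin n → ℝ) → (Fin n → ℝ))
    (q : ℝ → (Fin n → ℝ) → ℝ)
    (hx : ContDiff ℝ (⊤ : ℕ∞) (fun p : ℝ × (Fin n → ℝ) => x p.1 p.2))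
    (hv : ContDiff ℝ (⊤ : ℕ∞) (fun p : ℝ × (Fin n → ℝ) => v p.1 p.2))
    (hq : ContDiff ℝ (⊤ : ℕ∞) (fun p : ℝ × (Fin n → ℝ) => q p.1 p.2))
    (hflow : ∀ t y, HasDerivAt (fun s => x s y) (v t (x t y)) t)
    (hdet : ∀ t y, IsUnit (gmat x t y).det)
    (r : ℕ) (hr : 1 ≤ r) :
    ∀ t (y : Fin n → ℝ) (I : Fin r → Fin n),
      deriv (fun s => covIterS (gmat x) s (q s) r y I) t -
          covIterS (gmat x) t (fun z => deriv (fun s => q s z) t) r y I =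
        -∑ s ∈ (Finset.Icc 1 (r - 1)).attach,
          (r.choose (s.1 + 1) : ℝ) *
            ((r.factorial : ℝ)⁻¹ * ∑ σ : Equiv.Perm (Fin r), ∑ e, ∑ f,
              (gmat x t y)⁻¹ e f *
                covIterV (gmat x) t (uT x v t) (s.1 + 1) y
                  (Fin.snoc
                    (fun m : Fin (s.1 + 1) =>
                      (I ∘ σ) (Fin.castLE
                        (by have h := (Finset.mem_Icc.mp s.2).2; omega) m)) e) *
                covIterS (gmat x) t (q t) (r - s.1) y
                  (fun m : Fin (r - s.1) =>
                    if (m : ℕ) = 0 then f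
                    else (I ∘ σ) ⟨s.1 + (m : ℕ), by
                      have h1 := (Finset.mem_Icc.mp s.2).2
                      have h2 := m.isLt
                      omega⟩)) := by
  intro t y I
  let xx : Fin n → Smooth n := fun i => ⟨fun p => x p.1 p.2 i, contDiff_pi.1 hx i⟩
  let qq : Smooth n := ⟨fun p => q p.1 p.2, hq⟩
  have hU : IsUnit (jac xx).det := isUnit_jac xx hdet
  have hv' : ∀ t y i, v t (toFlow xx t y) i = Smooth.ev t y (Smooth.dT (xx i)) := fun t y i => by
    rw [← Smooth.deriv_ev]
    exact ((hasDerivAt_pi.1 (hflow t y) i).deriv).symm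
  set Fr := flowFrame xx hU
  have e1 : ∀ s, covIterS (gmat x) s (q s) r y I =
      Smooth.ev s y (Fr.nabS I Finset.univ qq) := fun s => covIterS_ev xx hU qq s r y I
  have e2 : (fun z => deriv (fun s => q s z) t) = fun z => Smooth.ev t z (Smooth.dT qq) :=
    funext fun z => Smooth.deriv_ev qq t z
  have e3 : covIterS (gmat x) t (fun z => deriv (fun s => q s z) t) r y I =
      Smooth.ev t y (Fr.nabS I Finset.univ (Smooth.dT qq)) := by
    rw [e2]; exact covIterS_ev xx hU (Smooth.dT qq) t r y I
  have e4 : Smooth.dT (Fr.nabS I Finset.univ qq) = Fr.nabS I Finset.univ (Smooth.dT qq) -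
      ∑ U ∈ (Finset.univ : Finset (Fin r)).powerset,
        if 2 ≤ U.card then Fr.pair I U (Finset.univ \ U) qq else 0 :=
    Fr.T_nabS I Finset.univ qq
  let Φ : Finset (Fin r) → ℝ := fun U => Smooth.ev t y (Fr.pair I U (Finset.univ \ U) qq)
  have e5 : Smooth.ev t y (∑ U ∈ (Finset.univ : Finset (Fin r)).powerset,
      if 2 ≤ U.card then Fr.pair I U (Finset.univ \ U) qq else 0) =
      ∑ s ∈ Finset.Icc 1 (r - 1), ∑ U ∈ Finset.powersetCard (s + 1) Finset.univ, Φ U := by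
    rw [← sum_two_le_card, map_sum]
    exact Finset.sum_congr rfl fun U _ => by split_ifs <;> simp [Φ]
  simp only [e1]
  rw [e3, Smooth.deriv_ev, e4, map_sub, e5,
    sub_sub_cancel_left, ← Finset.sum_attach]
  congr 1
  refine Finset.sum_congr rfl fun s _ => ?_
  have hs := Finset.mem_Icc.mp s.2
  have hsr : s.1 + 1 ≤ r := by omega
  have hc : (Finset.univ.map (Fin.castLEEmb hsr)).card = s.1 + 1 := by simp
  have key := sum_perm_map (Finset.univ.map (Fin.castLEEmb hsr)) Φ
  rw [hc] at key
  rw [← key]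
  congr 2
  refine Finset.sum_congr rfl fun σ _ => ?_
  -- the first `s + 1` permuted indices form `U = σ(S)`, the remaining ones its complement
  have hσ : Finset.univ \ (Finset.univ.map (Fin.castLEEmb hsr)).map σ.toEmbedding =
      (Finset.univ \ Finset.univ.map (Fin.castLEEmb hsr)).map σ.toEmbedding := by
    ext i; simp [Equiv.eq_symm_apply]
  have h := contract_ev xx hU v hv' qq t y
    (fun m : Fin (s.1 + 1) => (I ∘ σ) (Fin.castLE hsr m)) _ _
    (block_map (show s.1 + (r - s.1) = r by omega) (by omega) hsr (I ∘ σ))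
  refine Eq.trans ?_ h.symm
  simp only [Φ, Frame.pair, Frame.nabS, hσ, Finset.map_val, Multiset.map_map]
  rfl
end
end
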